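/- Let $l_0 > 0$ and let $(\beta_n)_{n \ge 0}$ be a strictly increasing sequence of positive real numbers. For each $n$ define $a_n = \operatorname{arcosh}\big((\cosh l_0 + \cosh \beta_n \cosh l_0)/(\sinh \beta_n \sinh l_0)\big)$ and $c_n = \operatorname{arsinh}(\sinh a_n \cdot \cosh l_0)$. Then there exists a constant $L > 0$ such that $a_n \le L$ and $c_n \le L$ for all $n \ge 0$. -/

import Mathlib

open Real

/-- `arcosh x = log (x + √(x² - 1))`, the inverse of `cosh` on `[1, ∞)`. -/
noncomputable def arcosh (x : ℝ) : ℝ := Real.log (x + Real.sqrt (x ^ 2 - 1))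

/-!
The cosine formula `cosh a = coth x * coth y + cosh z / (sinh x * sinh y)` for right-angled hexagons
shows that `a` decreases with the side `x`. A positive lower bound `δ` for the sides `β n` thus
bounds every `a n` by the value of `a` at `δ`, and, as `c` increases with `a`, every `c n` by the
value of `c` at `δ`. Moreover `a ≤ c`, so the latter value bounds both sequences.
-/

theorem arcosh_eq_real_arcosh (x : ℝ) : _root_.arcosh x = Real.arcosh x := rfl

/-- In a right-angled hyperbolic hexagon with pairwise non-adjacent sides `x`, `y`, `z`, the length
of the side joining `x` and `y`, given by the law of cosines. -/
noncomputable def hexagonSide (x y z : ℝ) : ℝ :=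
  Real.arcosh ((cosh z + cosh x * cosh y) / (sinh x * sinh y))

/-- In a hyperbolic quadrilateral with three right angles, the length of the side opposite to `a`,
where `a` joins two right angles and the adjacent side `l` ends at the fourth vertex. It is the
distance from that vertex to the line containing the side opposite to `l`. -/
noncomputable def lambertSide (a l : ℝ) : ℝ :=
  arsinh (sinh a * cosh l)

theorem antitoneOn_cosh_div_sinh : AntitoneOn (fun x ↦ cosh x / sinh x) (Set.Ioi 0) := by
  intro x (hx : 0 < x) y (hy : 0 < y) hxy
  have hsub : 0 ≤ sinh y * cosh x - cosh y * sinh x := by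
    rw [← sinh_sub]
    exact sinh_nonneg_iff.2 (sub_nonneg.2 hxy)
  refine (div_le_div_iff₀ (sinh_pos_iff.2 hy) (sinh_pos_iff.2 hx)).2 ?_
  linarith

theorem one_lt_cosh_add_cosh_mul_cosh_div {x y : ℝ} (hx : 0 < x) (hy : 0 < y) (z : ℝ) :
    1 < (cosh z + cosh x * cosh y) / (sinh x * sinh y) := by
  have hsinh : 0 < sinh x * sinh y := mul_pos (sinh_pos_iff.2 hx) (sinh_pos_iff.2 hy)
  have hcosh_sub : 0 < cosh x * cosh y - sinh x * sinh y := cosh_sub x y ▸ cosh_pos (x - y)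
  rw [one_lt_div hsinh]
  linarith [cosh_pos z]

theorem hexagonSide_pos {x y : ℝ} (hx : 0 < x) (hy : 0 < y) (z : ℝ) : 0 < hexagonSide x y z :=
  arcosh_pos (one_lt_cosh_add_cosh_mul_cosh_div hx hy z)

theorem antitoneOn_cosh_add_cosh_mul_cosh_div {y : ℝ} (hy : 0 < y) (z : ℝ) :
    AntitoneOn (fun x ↦ (cosh z + cosh x * cosh y) / (sinh x * sinh y)) (Set.Ioi 0) := by
  intro x (hx : 0 < x) x' (hx' : 0 < x') hxx'
  have : 0 < sinh x := sinh_pos_iff.2 hx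
  have : 0 < sinh y := sinh_pos_iff.2 hy
  have hsinh_le : sinh x ≤ sinh x' := sinh_le_sinh.2 hxx'
  have hcoth_le : cosh x' / sinh x' ≤ cosh x / sinh x := antitoneOn_cosh_div_sinh hx hx' hxx'
  have : 0 < cosh y := cosh_pos y
  have : 0 < cosh z := cosh_pos z
  simp only [add_div, mul_div_mul_comm]
  gcongr

theorem antitoneOn_hexagonSide {y : ℝ} (hy : 0 < y) (z : ℝ) :
    AntitoneOn (fun x ↦ hexagonSide x y z) (Set.Ioi 0) :=
  fun _ hx _ hx' hxx' ↦
    (arcosh_le_arcosh (one_pos.trans (one_lt_cosh_add_cosh_mul_cosh_div hx' hy z))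
      (one_pos.trans (one_lt_cosh_add_cosh_mul_cosh_div hx hy z))).2
      (antitoneOn_cosh_add_cosh_mul_cosh_div hy z hx hx' hxx')

theorem monotone_lambertSide (l : ℝ) : Monotone fun a ↦ lambertSide a l :=
  fun _ _ hab ↦ arsinh_le_arsinh.2 <|
    mul_le_mul_of_nonneg_right (sinh_le_sinh.2 hab) (cosh_pos l).le

theorem le_lambertSide {a : ℝ} (ha : 0 ≤ a) (l : ℝ) : a ≤ lambertSide a l :=
  calc a = arsinh (sinh a) := (arsinh_sinh a).symm
    _ ≤ lambertSide a l :=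
      arsinh_le_arsinh.2 (le_mul_of_one_le_right (sinh_nonneg_iff.2 ha) (one_le_cosh l))

theorem stmt_8_general {ι : Type*} {l0 δ : ℝ} (hl0 : 0 < l0) (hδ : 0 < δ) {β : ι → ℝ}
    (hβ : ∀ i, δ ≤ β i) {a c : ι → ℝ} (ha : ∀ i, a i = hexagonSide (β i) l0 l0)
    (hc : ∀ i, c i = lambertSide (a i) l0) :
    ∃ L : ℝ, 0 < L ∧ ∀ i, a i ≤ L ∧ c i ≤ L := by
  have hpos : 0 < hexagonSide δ l0 l0 := hexagonSide_pos hδ hl0 l0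
  have hle : hexagonSide δ l0 l0 ≤ lambertSide (hexagonSide δ l0 l0) l0 :=
    le_lambertSide hpos.le l0
  have ha_le (i : ι) : a i ≤ hexagonSide δ l0 l0 :=
    ha i ▸ antitoneOn_hexagonSide hl0 l0 hδ (hδ.trans_le (hβ i)) (hβ i)
  exact ⟨lambertSide (hexagonSide δ l0 l0) l0, hpos.trans_le hle,
    fun i ↦ ⟨(ha_le i).trans hle, hc i ▸ monotone_lambertSide l0 (ha_le i)⟩⟩

/-- uniform bound on the vertex-to-side distances in right-angled
hexagons with pairwise non-adjacent side lengths `β n, l0, l0`. -/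
theorem stmt_8 (l0 : ℝ) (hl0 : 0 < l0) (β : ℕ → ℝ)
    (hβpos : ∀ n, 0 < β n) (hβmono : StrictMono β)
    (a c : ℕ → ℝ)
    (ha : ∀ n, a n =
      _root_.arcosh ((Real.cosh l0 + Real.cosh (β n) * Real.cosh l0) /
        (Real.sinh (β n) * Real.sinh l0)))
    (hc : ∀ n, c n = Real.arsinh (Real.sinh (a n) * Real.cosh l0)) :
    ∃ L : ℝ, 0 < L ∧ ∀ n, a n ≤ L ∧ c n ≤ L :=
  stmt_8_general hl0 (hβpos 0) (fun n ↦ hβmono.monotone n.zero_le)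
    (fun n ↦ (ha n).trans (arcosh_eq_real_arcosh _)) hc
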